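/- (Optimality of the linear decay rate.) Let d ≥ 1 be an integer and let ν, s ∈ ℝ with s > ν. There are constants c, C > 0 depending only on d, s, ν such that for every measurable function h : ℝ^d → ℂ (playing the role of the Fourier transform ĝ₀ of the initial datum) with sup_{j∈ℤ} ∫_{C_j} |ξ|^{ν} |h(ξ)| dξ < ∞, where C_j = {ξ ∈ ℝ^d : 2^{j-1} ≤ |ξ| < 2^j}, one has c · sup_{j∈ℤ} ∫_{C_j} |ξ|^{ν} |h(ξ)| dξ ≤ sup_{t>0} t^{s-ν} ∫_{ℝ^d} |ξ|^s e^{-t|ξ|} |h(ξ)| dξ ≤ C · sup_{j∈ℤ} ∫_{C_j} |ξ|^{ν} |h(ξ)| dξ. (On the Fourier side, ∫_{ℝ^d} |ξ|^s e^{-t|ξ|} |h(ξ)| dξ equals the s-norm ‖e^{-tΛ} g₀‖_s of the solution of the linearized Muskat equation ∂_t g = -Λg, where (Λg)^(ξ) = |ξ| ĝ(ξ).) -/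

import Mathlib

open MeasureTheory Real FourierTransform
open scoped FourierTransform ENNReal

noncomputable section

/-- The dyadic annulus `C_j = {ξ ∈ ℝ^d : 2^{j-1} ≤ |ξ| < 2^j}`. -/
def annulus (d : ℕ) (j : ℤ) : Set (EuclideanSpace ℝ (Fin d)) :=
  {ξ | (2 : ℝ) ^ (j - 1) ≤ ‖ξ‖ ∧ ‖ξ‖ < (2 : ℝ) ^ j}

/-- The Besov-type quantity `sup_{j∈ℤ} ∫_{C_j} |ξ|^ν |h(ξ)| dξ` for a function `h`
playing the role of the Fourier transform `ĝ₀` of the initial datum. -/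
noncomputable def besovOfFT (d : ℕ) (ν : ℝ) (h : EuclideanSpace ℝ (Fin d) → ℂ) : ℝ≥0∞ :=
  ⨆ j : ℤ, ∫⁻ ξ in annulus d j, ENNReal.ofReal (‖ξ‖ ^ ν * ‖h ξ‖)

/-- `sup_{t>0} t^{s-ν} ∫_{ℝ^d} |ξ|^s e^{-t|ξ|} |h(ξ)| dξ`, i.e.
`sup_{t>0} t^{s-ν} ‖e^{-tΛ} g₀‖ₛ` on the Fourier side, where `h = ĝ₀`. -/
noncomputable def linearDecaySup (d : ℕ) (s ν : ℝ) (h : EuclideanSpace ℝ (Fin d) → ℂ) :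
    ℝ≥0∞ :=
  ⨆ t : {t : ℝ // 0 < t}, ENNReal.ofReal ((t : ℝ) ^ (s - ν)) *
    ∫⁻ ξ : EuclideanSpace ℝ (Fin d),
      ENNReal.ofReal (‖ξ‖ ^ s * Real.exp (-(t : ℝ) * ‖ξ‖) * ‖h ξ‖)

/-!
With `φ x = x ^ (s - ν) * exp (-x)`, the decay functional is `sup_t ∫ φ(t|ξ|) |ξ|^ν |h(ξ)| dξ`,
since `t ^ (s - ν) * |ξ| ^ s = (t|ξ|) ^ (s - ν) * |ξ| ^ ν`. As `φ` is bounded below on `[1/2, 1)`,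
the time `t = 2 ^ (-j)` detects the mass of `C_j`. As `φ` decays like a power at both `0` and `∞`,
its suprema over dyadic intervals are summable, so that for each `t` all the annuli together
contribute at most a constant times the largest of their masses.
-/

section DyadicDecomposition

open Set

lemma exists_mem_Ico_two_zpow {x : ℝ} (hx : 0 < x) :
    ∃ j : ℤ, x ∈ Ico ((2 : ℝ) ^ (j - 1)) (2 ^ j) := by
  obtain ⟨k, hk⟩ := exists_mem_Ico_zpow hx one_lt_two
  exact ⟨k + 1, by simpa only [add_sub_cancel_right] using hk⟩

lemma pos_of_mem_Ico_two_zpow {x : ℝ} {j k : ℤ} (hx : x ∈ Ico ((2 : ℝ) ^ j) (2 ^ k)) : 0 < x :=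
  (zpow_pos two_pos j).trans_le hx.1

lemma mul_mem_Ico_two_zpow {x y : ℝ} {j k : ℤ} (hx : x ∈ Ico ((2 : ℝ) ^ (j - 1)) (2 ^ j))
    (hy : y ∈ Ico ((2 : ℝ) ^ (k - 1)) (2 ^ k)) :
    x * y ∈ Ico ((2 : ℝ) ^ (j + k - 2)) (2 ^ (j + k)) := by
  have hx₀ : 0 < x := pos_of_mem_Ico_two_zpow hx
  have hy₀ : 0 < y := pos_of_mem_Ico_two_zpow hy
  rw [show j + k - 2 = (j - 1) + (k - 1) by ring, zpow_add₀ two_ne_zero, zpow_add₀ two_ne_zero]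
  exact ⟨mul_le_mul hx.1 hy.1 (by positivity) hx₀.le, mul_lt_mul'' hx.2 hy.2 hx₀.le hy₀.le⟩

variable {X : Type*}

/-- The dyadic shell `{2 ^ (j - 1) ≤ ρ < 2 ^ j}` of a function `ρ`; for `ρ = ‖·‖` on `ℝ^d` it is
the annulus `C_j`. -/
def dyadicShell (ρ : X → ℝ) (j : ℤ) : Set X :=
  ρ ⁻¹' Ico (2 ^ (j - 1)) (2 ^ j)

variable [MeasurableSpace X]

/-- The supremum over `j` of the mass that the weight `w` puts on the `j`-th dyadic shell of `ρ`;
for `ρ = ‖·‖` and `w = |ξ|^ν |h|` it is the Besov-type norm. -/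
def dyadicSup (μ : Measure X) (ρ : X → ℝ) (w : X → ℝ≥0∞) : ℝ≥0∞ :=
  ⨆ j : ℤ, ∫⁻ x in dyadicShell ρ j, w x ∂μ

/-- The quantity `sup_{t > 0} ∫ φ(t ρ) w dμ` obtained by testing the weight `w` against all
dilations of the profile `φ`. Negative values of `φ` count as `0`. -/
def dilationSup (μ : Measure X) (ρ : X → ℝ) (φ : ℝ → ℝ) (w : X → ℝ≥0∞) : ℝ≥0∞ :=
  ⨆ t : {t : ℝ // 0 < t}, ∫⁻ x, ENNReal.ofReal (φ (t * ρ x)) * w x ∂μ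

variable {μ : Measure X} {ρ : X → ℝ} {φ : ℝ → ℝ} {w : X → ℝ≥0∞}

lemma measurableSet_dyadicShell (hρ : Measurable ρ) (j : ℤ) : MeasurableSet (dyadicShell ρ j) :=
  hρ measurableSet_Ico

lemma lintegral_le_tsum_dyadicShell (hρ : ∀ᵐ x ∂μ, 0 < ρ x) (f : X → ℝ≥0∞) :
    ∫⁻ x, f x ∂μ ≤ ∑' j : ℤ, ∫⁻ x in dyadicShell ρ j, f x ∂μ := by
  have hcover : (⋃ j, dyadicShell ρ j) =ᵐ[μ] univ := by
    rw [Filter.eventuallyEq_univ]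
    filter_upwards [hρ] with x hx using mem_iUnion.2 (exists_mem_Ico_two_zpow hx)
  rw [← setLIntegral_univ, ← setLIntegral_congr hcover]
  exact lintegral_iUnion_le _ _

theorem mul_dyadicSup_le_dilationSup {c : ℝ} (hρ : Measurable ρ)
    (hφ : ∀ x ∈ Ico (1 / 2 : ℝ) 1, c ≤ φ x) :
    ENNReal.ofReal c * dyadicSup μ ρ w ≤ dilationSup μ ρ φ w := by
  rw [dyadicSup, ENNReal.mul_iSup]
  refine iSup_le fun j => ?_
  have hscale : ∀ x ∈ dyadicShell ρ j, (2 ^ j)⁻¹ * ρ x ∈ Ico (1 / 2 : ℝ) 1 := fun x hx => by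
    have hx' : (2 : ℝ) ^ j / 2 ≤ ρ x := (zpow_sub_one₀ two_ne_zero j).symm.le.trans hx.1
    rw [inv_mul_eq_div]
    exact ⟨by rw [le_div_iff₀ (by positivity)]; linarith, (div_lt_one (by positivity)).2 hx.2⟩
  calc ENNReal.ofReal c * ∫⁻ x in dyadicShell ρ j, w x ∂μ
      ≤ ∫⁻ x in dyadicShell ρ j, ENNReal.ofReal c * w x ∂μ := lintegral_const_mul_le _ _
    _ ≤ ∫⁻ x in dyadicShell ρ j, ENNReal.ofReal (φ ((2 ^ j)⁻¹ * ρ x)) * w x ∂μ :=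
        setLIntegral_mono' (measurableSet_dyadicShell hρ j) fun x hx => by
          gcongr; exact hφ _ (hscale x hx)
    _ ≤ ∫⁻ x, ENNReal.ofReal (φ ((2 ^ j)⁻¹ * ρ x)) * w x ∂μ := setLIntegral_le_lintegral _ _
    _ ≤ dilationSup μ ρ φ w := le_iSup_of_le ⟨(2 ^ j)⁻¹, by positivity⟩ le_rfl

-- The windows are `[2 ^ (n - 2), 2 ^ n)` because `t * ρ x` ranges over two adjacent dyadic
-- intervals when `t` and `ρ x` each range over one.
theorem dilationSup_le_tsum_mul_dyadicSup {ψ : ℤ → ℝ} (hρ : Measurable ρ)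
    (hρ_pos : ∀ᵐ x ∂μ, 0 < ρ x) (hφ : ∀ n : ℤ, ∀ x ∈ Ico ((2 : ℝ) ^ (n - 2)) (2 ^ n), φ x ≤ ψ n) :
    dilationSup μ ρ φ w ≤ (∑' n, ENNReal.ofReal (ψ n)) * dyadicSup μ ρ w := by
  refine iSup_le fun t => ?_
  obtain ⟨k, hk⟩ := exists_mem_Ico_two_zpow t.2
  calc ∫⁻ x, ENNReal.ofReal (φ (t * ρ x)) * w x ∂μ
      ≤ ∑' j : ℤ, ∫⁻ x in dyadicShell ρ j, ENNReal.ofReal (φ (t * ρ x)) * w x ∂μ :=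
        lintegral_le_tsum_dyadicShell hρ_pos _
    _ ≤ ∑' j : ℤ, ∫⁻ x in dyadicShell ρ j, ENNReal.ofReal (ψ (k + j)) * w x ∂μ :=
        ENNReal.tsum_le_tsum fun j =>
          setLIntegral_mono' (measurableSet_dyadicShell hρ j) fun x hx => by
            gcongr; exact hφ _ _ (mul_mem_Ico_two_zpow hk hx)
    _ = ∑' j : ℤ, ENNReal.ofReal (ψ (k + j)) * ∫⁻ x in dyadicShell ρ j, w x ∂μ := by
        simp only [lintegral_const_mul' _ _ ENNReal.ofReal_ne_top]
    _ ≤ ∑' j : ℤ, ENNReal.ofReal (ψ (k + j)) * dyadicSup μ ρ w :=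
        ENNReal.tsum_le_tsum fun j => by gcongr; exact le_iSup_of_le j le_rfl
    _ = (∑' n, ENNReal.ofReal (ψ n)) * dyadicSup μ ρ w := by
        rw [ENNReal.tsum_mul_right]
        exact congrArg (· * _) ((Equiv.addLeft k).tsum_eq fun n => ENNReal.ofReal (ψ n))

end DyadicDecomposition

section DecayProfile

open Set

variable {a x : ℝ}

lemma rpow_mul_exp_neg_le_exp_neg_mul_abs_log (ha : 0 ≤ a) (hx : 0 < x) :
    x ^ a * exp (-x) ≤ (1 + (2 * a) ^ (2 * a)) * exp (-(a * |log x|)) := by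
  have hK : 0 ≤ (2 * a) ^ (2 * a) := by positivity
  rcases le_total x 1 with hx₁ | hx₁
  · calc x ^ a * exp (-x) ≤ x ^ a * 1 := by gcongr; exact exp_le_one_iff.2 (by linarith)
      _ = 1 * exp (-(a * |log x|)) := by
        rw [abs_of_nonpos (log_nonpos hx.le hx₁), rpow_def_of_pos hx]; ring_nf
      _ ≤ (1 + (2 * a) ^ (2 * a)) * exp (-(a * |log x|)) := by gcongr; linarith
  · have hexp : x ^ (2 * a) ≤ (2 * a) ^ (2 * a) * exp x := by
      simpa [abs_of_pos hx] using
        ProbabilityTheory.rpow_abs_le_mul_exp_abs x (by positivity : 0 ≤ 2 * a) one_ne_zero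
    calc x ^ a * exp (-x) = x ^ (2 * a) * exp (-x) * x ^ (-a) := by
          rw [mul_right_comm, ← rpow_add hx]; ring_nf
      _ ≤ (2 * a) ^ (2 * a) * exp x * exp (-x) * x ^ (-a) := by gcongr
      _ = (2 * a) ^ (2 * a) * exp (-(a * |log x|)) := by
        rw [mul_assoc _ (exp x), ← exp_add, add_neg_cancel, exp_zero, mul_one,
          abs_of_nonneg (log_nonneg hx₁), rpow_def_of_pos hx]; ring_nf
      _ ≤ (1 + (2 * a) ^ (2 * a)) * exp (-(a * |log x|)) := by gcongr; linarith

lemma abs_sub_two_mul_log_two_le_abs_log {n : ℤ} (hx : x ∈ Ico ((2 : ℝ) ^ (n - 2)) (2 ^ n)) :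
    (|(n : ℝ)| - 2) * log 2 ≤ |log x| := by
  have hlog₂ : 0 < log 2 := log_pos one_lt_two
  have hx₀ : 0 < x := pos_of_mem_Ico_two_zpow hx
  have hlower : ((n : ℝ) - 2) * log 2 ≤ log x := by
    simpa [log_zpow] using log_le_log (by positivity) hx.1
  have hupper : log x ≤ n * log 2 := by
    simpa [log_zpow] using log_le_log hx₀ hx.2.le
  rcases abs_cases (n : ℝ) with ⟨hn, -⟩ | ⟨hn, -⟩ <;> rw [hn]
  · exact hlower.trans (le_abs_self _)
  · linarith [neg_le_abs (log x)]

lemma summable_exp_neg_mul_abs_intCast {b : ℝ} (hb : 0 < b) :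
    Summable fun n : ℤ => exp (-(b * |(n : ℝ)|)) := by
  have hnat : Summable fun n : ℕ => exp (-(b * n)) := by
    simpa [mul_comm] using summable_exp_nat_mul_iff.2 (neg_neg_of_pos hb)
  exact .of_nat_of_neg (by simpa using hnat) (by simpa using hnat)

theorem exists_summable_rpow_mul_exp_neg_le (ha : 0 < a) :
    ∃ ψ : ℤ → ℝ, Summable ψ ∧ (∀ n, 0 < ψ n) ∧
      ∀ n : ℤ, ∀ x ∈ Ico ((2 : ℝ) ^ (n - 2)) (2 ^ n), x ^ a * exp (-x) ≤ ψ n := by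
  have hlog₂ : 0 < log 2 := log_pos one_lt_two
  refine ⟨fun n => (1 + (2 * a) ^ (2 * a)) *
      (exp (2 * (a * log 2)) * exp (-(a * log 2 * |(n : ℝ)|))),
    ((summable_exp_neg_mul_abs_intCast (mul_pos ha hlog₂)).mul_left _).mul_left _,
    fun n => by positivity, fun n x hx => ?_⟩
  have hx₀ : 0 < x := pos_of_mem_Ico_two_zpow hx
  calc x ^ a * exp (-x) ≤ (1 + (2 * a) ^ (2 * a)) * exp (-(a * |log x|)) :=
        rpow_mul_exp_neg_le_exp_neg_mul_abs_log ha.le hx₀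
    _ ≤ (1 + (2 * a) ^ (2 * a)) * exp (-(a * ((|(n : ℝ)| - 2) * log 2))) := by
        gcongr; exact abs_sub_two_mul_log_two_le_abs_log hx
    _ = (1 + (2 * a) ^ (2 * a)) * (exp (2 * (a * log 2)) * exp (-(a * log 2 * |(n : ℝ)|))) := by
        rw [← exp_add]; ring_nf

lemma half_rpow_mul_exp_neg_one_le (ha : 0 ≤ a) (hx : x ∈ Ico (1 / 2 : ℝ) 1) :
    (1 / 2 : ℝ) ^ a * exp (-1) ≤ x ^ a * exp (-x) := by
  have hx₀ : 0 ≤ x := one_half_pos.le.trans hx.1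
  gcongr
  exacts [hx.1, hx.2.le]

end DecayProfile

section Multiplier

variable {X F : Type*} [MeasurableSpace X] [SeminormedAddGroup F]

/-- The decay functional `sup_{t > 0} t ^ (s - ν) ∫ ρ ^ s exp (-t ρ) ‖h‖ dμ` of the semigroup with
symbol `exp (-t ρ)`; the symbol `ρ = ‖·‖` on `ℝ^d` is that of `e^{-tΛ}`. -/
def multiplierDecaySup (μ : Measure X) (ρ : X → ℝ) (s ν : ℝ) (h : X → F) : ℝ≥0∞ :=
  ⨆ t : {t : ℝ // 0 < t}, ENNReal.ofReal ((t : ℝ) ^ (s - ν)) *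
    ∫⁻ x, ENNReal.ofReal (ρ x ^ s * exp (-(t : ℝ) * ρ x) * ‖h x‖) ∂μ

lemma rpow_sub_mul_rpow {t y : ℝ} (ht : 0 ≤ t) (hy : 0 < y) (s ν : ℝ) :
    t ^ (s - ν) * y ^ s = (t * y) ^ (s - ν) * y ^ ν := by
  rw [mul_rpow ht hy.le, mul_assoc, ← rpow_add hy, sub_add_cancel]

lemma multiplierDecaySup_eq_dilationSup {μ : Measure X} {ρ : X → ℝ} (hρ : ∀ᵐ x ∂μ, 0 < ρ x)
    (s ν : ℝ) (h : X → F) :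
    multiplierDecaySup μ ρ s ν h =
      dilationSup μ ρ (fun y => y ^ (s - ν) * exp (-y))
        fun x => ENNReal.ofReal (ρ x ^ ν * ‖h x‖) := by
  refine iSup_congr fun ⟨t, ht⟩ => ?_
  rw [← lintegral_const_mul' _ _ ENNReal.ofReal_ne_top]
  refine lintegral_congr_ae ?_
  filter_upwards [hρ] with x hx
  rw [← ENNReal.ofReal_mul (by positivity), ← ENNReal.ofReal_mul (by positivity)]
  congr 1
  calc t ^ (s - ν) * (ρ x ^ s * exp (-t * ρ x) * ‖h x‖)
      = t ^ (s - ν) * ρ x ^ s * exp (-(t * ρ x)) * ‖h x‖ := by rw [neg_mul]; ring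
    _ = (t * ρ x) ^ (s - ν) * exp (-(t * ρ x)) * (ρ x ^ ν * ‖h x‖) := by
        rw [rpow_sub_mul_rpow ht.le hx]; ring

end Multiplier

lemma ae_norm_pos {E : Type*} [NormedAddGroup E] [MeasurableSpace E] (μ : Measure E)
    [NullSingletonClass μ] : ∀ᵐ ξ ∂μ, 0 < ‖ξ‖ := by
  filter_upwards [compl_mem_ae_iff.2 (measure_singleton (0 : E))] with ξ hξ using norm_pos_iff.2 hξ

theorem stmt8_general (ν s : ℝ) (hs : ν < s) :
    ∃ c > (0 : ℝ), ∃ C > (0 : ℝ), ∀ {X F : Type*} [MeasurableSpace X] [SeminormedAddGroup F]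
      (μ : Measure X) (ρ : X → ℝ), Measurable ρ → (∀ᵐ x ∂μ, 0 < ρ x) →
      ∀ h : X → F,
        ENNReal.ofReal c * dyadicSup μ ρ (fun x => ENNReal.ofReal (ρ x ^ ν * ‖h x‖)) ≤
            multiplierDecaySup μ ρ s ν h ∧
          multiplierDecaySup μ ρ s ν h ≤
            ENNReal.ofReal C * dyadicSup μ ρ (fun x => ENNReal.ofReal (ρ x ^ ν * ‖h x‖)) := by
  have ha : 0 < s - ν := sub_pos.2 hs
  obtain ⟨ψ, hψ, hψ_pos, hφψ⟩ := exists_summable_rpow_mul_exp_neg_le ha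
  refine ⟨(1 / 2) ^ (s - ν) * exp (-1), by positivity, ∑' n, ψ n,
    hψ.tsum_pos (fun n => (hψ_pos n).le) 0 (hψ_pos 0), fun μ ρ hρ hρ_pos h => ?_⟩
  rw [multiplierDecaySup_eq_dilationSup hρ_pos,
    ENNReal.ofReal_tsum_of_nonneg (fun n => (hψ_pos n).le) hψ]
  exact ⟨mul_dyadicSup_le_dilationSup hρ fun _ => half_rpow_mul_exp_neg_one_le ha.le,
    dilationSup_le_tsum_mul_dyadicSup hρ hρ_pos hφψ⟩

/-- Optimality of the linear decay rate for the semigroup `e^{-tΛ}`. -/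
theorem stmt8 (d : ℕ) (hd : 1 ≤ d) (ν s : ℝ) (hs : ν < s) :
    ∃ c > (0 : ℝ), ∃ C > (0 : ℝ), ∀ h : EuclideanSpace ℝ (Fin d) → ℂ, Measurable h →
      besovOfFT d ν h < ⊤ →
      ENNReal.ofReal c * besovOfFT d ν h ≤ linearDecaySup d s ν h ∧
        linearDecaySup d s ν h ≤ ENNReal.ofReal C * besovOfFT d ν h := by
  have : Nonempty (Fin d) := ⟨⟨0, hd⟩⟩
  obtain ⟨c, hc, C, hC, hbounds⟩ := stmt8_general ν s hs
  exact ⟨c, hc, C, hC, fun h _ _ => hbounds volume norm measurable_norm (ae_norm_pos _) h⟩
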